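/- arXiv:1011.6401 — 2 statements merged into one kernel-verified Lean document; each statement's English description precedes it below -/
import Mathlib

section
/- Let a,b,c ∈ ℝ be constants, not all zero, and consider the singular scale-invariant plane wave metric on U = {(u,v,y,z) ∈ ℝ⁴ : u > 0} given by the pp-wave metric with 2H = u⁻²(a y² + 2b yz + c z²). Then the vector field X₆ with covariant components (X₆)_a = −2v δ^u_a + y δ^y_a + z δ^z_a satisfies ∇_{(a}(X₆)_{b)} = g_{ab} (it is a homothetic vector field with ψ = 1), and the Koutras Killing tensor L_{ab} = k_{(a}(X₆)_{b)} + u g_{ab}, where k_a = −δ^u_a, is reducible. -/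
noncomputable section

/-- Points of (an open subset of) `ℝ⁴`, with coordinates `(u,v,y,z)` indexed by `0,1,2,3`. -/
abbrev Pt : Type := Fin 4 → ℝ

/-- Partial derivative of a function in the `i`-th coordinate direction. -/
def pd (i : Fin 4) (f : Pt → ℝ) (p : Pt) : ℝ :=
  fderiv ℝ f p (Pi.single i 1)

/-- Kronecker delta `δ^i_a`. -/
def kd (i a : Fin 4) : ℝ := if i = a then 1 else 0

/-- Symmetrized product of Kronecker deltas, `δ_{(a}^i δ_{b)}^j`. -/
def sd (i j a b : Fin 4) : ℝ := (kd i a * kd j b + kd j a * kd i b) / 2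

/-- Components of the pp-wave metric `g = -2 du dv - 2H du² + dy² + dz²`. -/
def ppMetric (H : Pt → ℝ) (p : Pt) (a b : Fin 4) : ℝ :=
  if a = 0 ∧ b = 0 then -2 * H p
  else if (a = 0 ∧ b = 1) ∨ (a = 1 ∧ b = 0) then -1
  else if (a = 2 ∧ b = 2) ∨ (a = 3 ∧ b = 3) then 1
  else 0

/-- Christoffel symbols `Γ^d_{ab}` of the pp-wave metric:
`Γ^v_{uu} = H_{,u}`, `Γ^y_{uu} = Γ^v_{uy} = Γ^v_{yu} = H_{,y}`,
`Γ^z_{uu} = Γ^v_{uz} = Γ^v_{zu} = H_{,z}`, all others zero. -/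
def Gamma (H : Pt → ℝ) (p : Pt) (d a b : Fin 4) : ℝ :=
  if d = 1 ∧ a = 0 ∧ b = 0 then pd 0 H p
  else if (d = 2 ∧ a = 0 ∧ b = 0) ∨ (d = 1 ∧ ((a = 0 ∧ b = 2) ∨ (a = 2 ∧ b = 0))) then pd 2 H p
  else if (d = 3 ∧ a = 0 ∧ b = 0) ∨ (d = 1 ∧ ((a = 0 ∧ b = 3) ∨ (a = 3 ∧ b = 0))) then pd 3 H p
  else 0

/-- Covariant derivative of a covector field: `∇_a X_b = ∂_a X_b - Γ^d_{ab} X_d`. -/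
def covD1 (H : Pt → ℝ) (X : Pt → Fin 4 → ℝ) (p : Pt) (a b : Fin 4) : ℝ :=
  pd a (fun q => X q b) p - ∑ d, Gamma H p d a b * X p d

/-- Covariant derivative of a 2-tensor field:
`∇_c T_{ab} = ∂_c T_{ab} - Γ^d_{ca} T_{db} - Γ^d_{cb} T_{ad}`. -/
def covD2 (H : Pt → ℝ) (T : Pt → Fin 4 → Fin 4 → ℝ) (p : Pt) (c a b : Fin 4) : ℝ :=
  pd c (fun q => T q a b) p - ∑ d, Gamma H p d c a * T p d b
    - ∑ d, Gamma H p d c b * T p a d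

/-- A Killing vector of the pp-wave metric on `U`, given by its covariant components:
a smooth covector field with `∇_{(a}X_{b)} = 0` on `U`. -/
def IsKillingVector (H : Pt → ℝ) (U : Set Pt) (X : Pt → Fin 4 → ℝ) : Prop :=
  (∀ a, ContDiffOn ℝ (⊤ : ℕ∞) (fun p => X p a) U) ∧
  ∀ p ∈ U, ∀ a b, covD1 H X p a b + covD1 H X p b a = 0

/-- A (second order) Killing tensor of the pp-wave metric on `U`: a smooth symmetric
2-tensor field with `∇_{(c}K_{ab)} = 0` on `U`. -/
def IsKillingTensor (H : Pt → ℝ) (U : Set Pt) (K : Pt → Fin 4 → Fin 4 → ℝ) : Prop :=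
  (∀ a b, ContDiffOn ℝ (⊤ : ℕ∞) (fun p => K p a b) U) ∧
  (∀ p a b, K p a b = K p b a) ∧
  ∀ p ∈ U, ∀ a b c,
    covD2 H K p c a b + covD2 H K p a b c + covD2 H K p b c a = 0

/-- A Killing tensor is reducible if (on `U`) it is a constant-coefficient linear combination
of the metric `g_{ab}` and finitely many symmetrized products `X_{(a}Y_{b)}` of Killing
vectors `X`, `Y`. -/
def IsReducible (H : Pt → ℝ) (U : Set Pt) (K : Pt → Fin 4 → Fin 4 → ℝ) : Prop :=
  ∃ (c₀ : ℝ) (n : ℕ) (c : Fin n → ℝ) (X Y : Fin n → Pt → Fin 4 → ℝ),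
    (∀ i, IsKillingVector H U (X i)) ∧ (∀ i, IsKillingVector H U (Y i)) ∧
    ∀ p ∈ U, ∀ a b, K p a b =
      c₀ * ppMetric H p a b + ∑ i, c i * ((X i p a * Y i p b + X i p b * Y i p a) / 2)


/-- The profile function of the scale-invariant plane wave. -/
def siH (a b c : ℝ) : Pt → ℝ := fun p =>
  (a * (p 2) ^ 2 + 2 * b * (p 2) * (p 3) + c * (p 3) ^ 2) / (2 * (p 0) ^ 2)

lemma hasFDerivAt_coord (i : Fin 4) (p : Pt) :
    HasFDerivAt (fun q : Pt => q i) (ContinuousLinearMap.proj (R := ℝ) (φ := fun _ : Fin 4 => ℝ) i) p :=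
  hasFDerivAt_apply i p

lemma siH_contDiffOn (a b c : ℝ) : ContDiffOn ℝ (⊤ : ℕ∞) (siH a b c) {p | 0 < p 0} := by
  unfold siH
  apply ContDiffOn.div
  · fun_prop
  · fun_prop
  · intro p hp
    have : (0:ℝ) < p 0 := hp
    positivity

lemma isOpen_U : IsOpen {p : Pt | 0 < p 0} :=
  isOpen_lt continuous_const (continuous_apply 0)

lemma siH_diff (a b c : ℝ) (p : Pt) (hp : 0 < p 0) : DifferentiableAt ℝ (siH a b c) p :=
  ((siH_contDiffOn a b c).differentiableOn (by simp)).differentiableAt (isOpen_U.mem_nhds hp)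

lemma siH_hasFDerivAt (a b c : ℝ) (p : Pt) (hp : 0 < p 0) (k : Fin 4) :
    pd k (siH a b c) p = -2 * siH a b c p / p 0 * kd 0 k
      + (a * p 2 + b * p 3) / (p 0) ^ 2 * kd 2 k + (b * p 2 + c * p 3) / (p 0) ^ 2 * kd 3 k := by
  have h0 := hasFDerivAt_coord 0 p
  have h2 := hasFDerivAt_coord 2 p
  have h3 := hasFDerivAt_coord 3 p
  have hne : (p 0) ≠ 0 := hp.ne'
  have hS := siH_diff a b c p hp
  have hN := (((h2.mul h2).const_mul a).add ((h2.mul h3).const_mul (2 * b))).add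
    ((h3.mul h3).const_mul c)
  have hP := ((h0.mul h0).const_mul 2).mul hS.hasFDerivAt
  have hev : (fun q : Pt => 2 * (q 0 * q 0) * siH a b c q) =ᶠ[nhds p]
      (fun q : Pt => a * (q 2 * q 2) + 2 * b * (q 2 * q 3) + c * (q 3 * q 3)) := by
    filter_upwards [isOpen_U.mem_nhds hp] with q hq
    have : q 0 ≠ 0 := ne_of_gt hq
    simp only [siH]
    field_simp
  have hP' := hN.congr_of_eventuallyEq hev
  have e := congrArg (fun (l : Pt →L[ℝ] ℝ) => l (Pi.single k 1)) (hP.unique hP')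
  simp only [add_apply, smul_apply, smul_eq_mul,
    ContinuousLinearMap.proj_apply, Pi.mul_apply] at e
  change _ * pd k (siH a b c) p + _ = _ at e
  have hk : ∀ i : Fin 4, (Pi.single k (1:ℝ) : Pt) i = kd i k := by
    intro i; simp [Pi.single_apply, kd]
  simp only [hk] at e
  field_simp
  linear_combination e / 2

lemma gen_contDiffOn (a b c : ℝ) (al be ga de ep : ℝ) :
    ContDiffOn ℝ (⊤ : ℕ∞) (fun q : Pt => al * q 1 + be * q 2 + ga * q 3 + de * q 0
      + ep * (q 0 * siH a b c q)) {p | 0 < p 0} := by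
  have := siH_contDiffOn a b c
  fun_prop

lemma pd_gen (a b c : ℝ) (al be ga de ep : ℝ) (p : Pt) (hp : 0 < p 0) (k : Fin 4) :
    pd k (fun q : Pt => al * q 1 + be * q 2 + ga * q 3 + de * q 0
      + ep * (q 0 * siH a b c q)) p
    = al * kd 1 k + be * kd 2 k + ga * kd 3 k + de * kd 0 k
      + ep * (kd 0 k * siH a b c p + p 0 * pd k (siH a b c) p) := by
  have h := ((((hasFDerivAt_coord 1 p).const_mul al).add ((hasFDerivAt_coord 2 p).const_mul be)).add
    ((hasFDerivAt_coord 3 p).const_mul ga)).add ((hasFDerivAt_coord 0 p).const_mul de)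
  have h' := h.add (((hasFDerivAt_coord 0 p).mul (siH_diff a b c p hp).hasFDerivAt).const_mul ep)
  have hk : ∀ i : Fin 4, (Pi.single k (1:ℝ) : Pt) i = kd i k := by
    intro i; simp [Pi.single_apply, kd]
  have e : pd k _ p = _ := congrArg (fun (l : Pt →L[ℝ] ℝ) => l (Pi.single k 1)) h'.fderiv
  refine Eq.trans e ?_
  simp only [add_apply, smul_apply, smul_eq_mul,
    ContinuousLinearMap.proj_apply, hk, pd]
  ring

/-- Homothetic vector field. -/
def hX : Pt → Fin 4 → ℝ := fun p i => -2 * p 1 * kd 0 i + p 2 * kd 2 i + p 3 * kd 3 i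

/-- Koutras tensor. -/
def kL (a b c : ℝ) : Pt → Fin 4 → Fin 4 → ℝ := fun p i j =>
  ((-kd 0 i) * hX p j + (-kd 0 j) * hX p i) / 2 + p 0 * ppMetric (siH a b c) p i j

lemma pd_hX (p : Pt) (hp : 0 < p 0) (k i : Fin 4) :
    pd k (fun q => hX q i) p = -2 * kd 0 i * kd 1 k + kd 2 i * kd 2 k + kd 3 i * kd 3 k := by
  have h := pd_gen 0 0 0 (-2 * kd 0 i) (kd 2 i) (kd 3 i) 0 0 p hp k
  have e : (fun q => hX q i) = (fun q : Pt => (-2 * kd 0 i) * q 1 + kd 2 i * q 2 + kd 3 i * q 3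
      + 0 * q 0 + 0 * (q 0 * siH 0 0 0 q)) := by
    funext q; simp only [hX]; ring
  rw [e, h]; ring

lemma hom_eq (a b c : ℝ) (p : Pt) (hp : 0 < p 0) (i j : Fin 4) :
    covD1 (siH a b c) hX p i j + covD1 (siH a b c) hX p j i
      = 2 * (1 * ppMetric (siH a b c) p i j) := by
  simp only [covD1, pd_hX p hp, Fin.sum_univ_four]
  have hne : (p 0) ≠ 0 := hp.ne'
  fin_cases i <;> fin_cases j <;>
    simp [Gamma, siH_hasFDerivAt a b c p hp, kd, hX, ppMetric, siH] <;> (try field_simp) <;> ring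

/-- Constant coefficient of the metric. -/
def eta (i j : Fin 4) : ℝ := ppMetric (fun _ => 0) 0 i j

lemma metric_eq (H : Pt → ℝ) (p : Pt) (i j : Fin 4) :
    ppMetric H p i j = -2 * H p * (kd 0 i * kd 0 j) + eta i j := by
  fin_cases i <;> fin_cases j <;> simp [ppMetric, eta, kd]

lemma kL_gen (a b c : ℝ) (i j : Fin 4) : (fun q => kL a b c q i j) =
    (fun q : Pt => (2 * kd 0 i * kd 0 j) * q 1 + (-(kd 0 i * kd 2 j + kd 0 j * kd 2 i) / 2) * q 2
      + (-(kd 0 i * kd 3 j + kd 0 j * kd 3 i) / 2) * q 3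
      + eta i j * q 0 + (-2 * (kd 0 i * kd 0 j)) * (q 0 * siH a b c q)) := by
  funext q; simp only [kL, metric_eq, hX]; ring

lemma kL_symm (a b c : ℝ) (p : Pt) (i j : Fin 4) : kL a b c p i j = kL a b c p j i := by
  fin_cases i <;> fin_cases j <;> simp [kL, ppMetric, kd, hX]

set_option maxHeartbeats 4000000 in
lemma kL_killing (a b c : ℝ) : IsKillingTensor (siH a b c) {p | 0 < p 0} (kL a b c) := by
  refine ⟨fun i j => ?_, kL_symm a b c, ?_⟩
  · rw [kL_gen]; exact gen_contDiffOn _ _ _ _ _ _ _ _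
  · intro p hp i j k
    have hp' : 0 < p 0 := hp
    have hne : (p 0) ≠ 0 := hp'.ne'
    simp only [covD2, kL_gen, pd_gen a b c _ _ _ _ _ p hp', Fin.sum_univ_four]
    fin_cases i <;> fin_cases j <;> fin_cases k <;>
      simp [Gamma, siH_hasFDerivAt a b c p hp, kd, hX, kL, ppMetric, eta, siH] <;>
      (try field_simp) <;> ring

/-- The null Killing vector. -/
def kN : Pt → Fin 4 → ℝ := fun _ i => -kd 0 i

/-- The scaling Killing vector. -/
def kD (a b c : ℝ) : Pt → Fin 4 → ℝ := fun p i =>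
  (p 1 - 2 * (p 0 * siH a b c p)) * kd 0 i - p 0 * kd 1 i

lemma kN_killing (a b c : ℝ) : IsKillingVector (siH a b c) {p | 0 < p 0} kN := by
  refine ⟨fun i => contDiffOn_const, ?_⟩
  intro p hp i j
  simp only [covD1, Fin.sum_univ_four, kN, pd, fderiv_fun_const]
  fin_cases i <;> fin_cases j <;> simp [Gamma, kd]

lemma kD_gen (a b c : ℝ) (i : Fin 4) : (fun q => kD a b c q i) =
    (fun q : Pt => kd 0 i * q 1 + 0 * q 2 + 0 * q 3
      + (-kd 1 i) * q 0 + (-2 * kd 0 i) * (q 0 * siH a b c q)) := by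
  funext q; simp only [kD]; ring

lemma kD_killing (a b c : ℝ) : IsKillingVector (siH a b c) {p | 0 < p 0} (kD a b c) := by
  refine ⟨fun i => ?_, ?_⟩
  · rw [kD_gen]; exact gen_contDiffOn _ _ _ _ _ _ _ _
  intro p hp i j
  have hp' : 0 < p 0 := hp
  have hne : (p 0) ≠ 0 := hp'.ne'
  simp only [covD1, Fin.sum_univ_four, kD_gen, pd_gen a b c _ _ _ _ _ p hp']
  fin_cases i <;> fin_cases j <;>
    simp [Gamma, siH_hasFDerivAt a b c p hp, kd, kD, siH] <;>
      (try field_simp) <;> ring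

/-- Solutions of the mode equation on the half line, with their derivative. -/
structure Sol (l : ℝ) (f f' : ℝ → ℝ) : Prop where
  smooth : ContDiffOn ℝ (⊤ : ℕ∞) f (Set.Ioi 0)
  smooth' : ContDiffOn ℝ (⊤ : ℕ∞) f' (Set.Ioi 0)
  deriv1 : ∀ u, 0 < u → HasDerivAt f (f' u) u
  deriv2 : ∀ u, 0 < u → HasDerivAt f' (-l * f u / u ^ 2) u

/-- Heisenberg Killing vector in the direction `(s,t)`. -/
def kF (f f' : ℝ → ℝ) (s t : ℝ) : Pt → Fin 4 → ℝ := fun p i =>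
  f' (p 0) * ((-s * kd 0 i) * p 2 + (-t * kd 0 i) * p 3) + f (p 0) * (s * kd 2 i + t * kd 3 i)

lemma kF_killing (a b c l s t : ℝ) (h1 : a * s + b * t = l * s) (h2 : b * s + c * t = l * t)
    (f f' : ℝ → ℝ) (hf : Sol l f f') :
    IsKillingVector (siH a b c) {p | 0 < p 0} (kF f f' s t) := by
  refine ⟨fun i => ?_, ?_⟩
  · have A : ContDiffOn ℝ (⊤ : ℕ∞) (fun p : Pt => f (p 0)) {p | 0 < p 0} :=
      hf.smooth.comp (t := Set.Ioi 0) (contDiff_apply ℝ ℝ (0 : Fin 4)).contDiffOn (fun p hp => hp)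
    have B : ContDiffOn ℝ (⊤ : ℕ∞) (fun p : Pt => f' (p 0)) {p | 0 < p 0} :=
      hf.smooth'.comp (t := Set.Ioi 0) (contDiff_apply ℝ ℝ (0 : Fin 4)).contDiffOn (fun p hp => hp)
    have C : ContDiffOn ℝ (⊤ : ℕ∞) (fun p : Pt => (-s * kd 0 i) * p 2 + (-t * kd 0 i) * p 3)
        {p | 0 < p 0} := by fun_prop
    exact (B.mul C).add (A.mul contDiffOn_const)
  intro p hp i j
  have hp' : 0 < p 0 := hp
  have hne : (p 0) ≠ 0 := hp'.ne'
  have hd : ∀ k i : Fin 4, pd k (fun q => kF f f' s t q i) p =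
      (-l * f (p 0) / (p 0) ^ 2) * kd 0 k * ((-s * kd 0 i) * p 2 + (-t * kd 0 i) * p 3)
      + f' (p 0) * ((-s * kd 0 i) * kd 2 k + (-t * kd 0 i) * kd 3 k)
      + f' (p 0) * kd 0 k * (s * kd 2 i + t * kd 3 i) := by
    intro k i
    have A := (hf.deriv1 _ hp').comp_hasFDerivAt p (hasFDerivAt_coord 0 p)
    have B := (hf.deriv2 _ hp').comp_hasFDerivAt p (hasFDerivAt_coord 0 p)
    have h := (B.mul (((hasFDerivAt_coord 2 p).const_mul (-s * kd 0 i)).add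
      ((hasFDerivAt_coord 3 p).const_mul (-t * kd 0 i)))).add (A.mul_const (s * kd 2 i + t * kd 3 i))
    have hk : ∀ i : Fin 4, (Pi.single k (1:ℝ) : Pt) i = kd i k := by
      intro i; simp [Pi.single_apply, kd]
    have e : pd k _ p = _ := congrArg (fun (l : Pt →L[ℝ] ℝ) => l (Pi.single k 1)) h.fderiv
    refine Eq.trans e ?_
    simp only [add_apply, smul_apply, smul_eq_mul,
      ContinuousLinearMap.proj_apply, hk, Function.comp, Pi.add_apply]
    ring
  simp only [covD1, Fin.sum_univ_four, hd]
  fin_cases i <;> fin_cases j <;>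
    simp [Gamma, siH_hasFDerivAt a b c p hp, kd, kF] <;> (try ring)
  field_simp
  linear_combination (-f (p 0) * p 2) * h1 + (-f (p 0) * p 3) * h2

lemma sol_zero (l : ℝ) : Sol l (fun _ => 0) (fun _ => 0) where
  smooth := contDiffOn_const
  smooth' := contDiffOn_const
  deriv1 u _ := hasDerivAt_const u 0
  deriv2 u _ := by simpa using hasDerivAt_const u (0:ℝ)

lemma sol_rpow (l r : ℝ) (hr : r * (r - 1) = -l) :
    Sol l (fun u => u ^ r) (fun u => r * u ^ (r - 1)) where
  smooth := fun u hu => (Real.contDiffAt_rpow_const_of_ne (ne_of_gt hu)).contDiffWithinAt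
  smooth' := fun u hu => (contDiffAt_const.mul
    (Real.contDiffAt_rpow_const_of_ne (ne_of_gt hu))).contDiffWithinAt
  deriv1 u hu := Real.hasDerivAt_rpow_const (Or.inl hu.ne')
  deriv2 u hu := by
    have := (Real.hasDerivAt_rpow_const (p := r - 1) (Or.inl hu.ne')).const_mul r
    refine this.congr_deriv ?_
    rw [← hr, Real.rpow_sub_one hu.ne' (r - 1), Real.rpow_sub_one hu.ne' r]
    field_simp

/-- `√u cos(w log u)`-type solutions. -/
lemma sol_osc (l w A B : ℝ) (hw : l = 1 / 4 + w ^ 2) :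
    Sol l (fun u => √u * (A * Real.cos (w * Real.log u) + B * Real.sin (w * Real.log u)))
      (fun u => √u / u * ((A / 2 + w * B) * Real.cos (w * Real.log u)
        + (B / 2 - w * A) * Real.sin (w * Real.log u))) := by
  have hl : ContDiffOn ℝ (⊤ : ℕ∞) Real.log (Set.Ioi 0) :=
    Real.contDiffOn_log.mono (fun u hu => ne_of_gt hu)
  have hs : ContDiffOn ℝ (⊤ : ℕ∞) (fun u => √u) (Set.Ioi 0) :=
    fun u hu => (Real.contDiffAt_sqrt (ne_of_gt hu)).contDiffWithinAt
  have hlw : ContDiffOn ℝ (⊤ : ℕ∞) (fun u => w * Real.log u) (Set.Ioi 0) := contDiffOn_const.mul hl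
  have hc := hlw.cos
  have hsn := hlw.sin
  have key : ∀ u, 0 < u → ∀ A B : ℝ,
      HasDerivAt (fun u => √u * (A * Real.cos (w * Real.log u) + B * Real.sin (w * Real.log u)))
      (√u / u * ((A / 2 + w * B) * Real.cos (w * Real.log u)
        + (B / 2 - w * A) * Real.sin (w * Real.log u))) u := by
    intro u hu A B
    have h1 := Real.hasDerivAt_sqrt hu.ne'
    have h2 := (Real.hasDerivAt_log hu.ne').const_mul w
    have h := h1.mul ((h2.cos.const_mul A).add (h2.sin.const_mul B))
    refine h.congr_deriv ?_
    have hq : √u * √u = u := Real.mul_self_sqrt hu.le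
    have hq0 : √u ≠ 0 := (Real.sqrt_pos.2 hu).ne'
    have : √u / u = 1 / √u := by field_simp; rw [pow_two, hq]
    have h3 : √u * u⁻¹ = 1 / √u := by rw [← this]; ring
    have h4 : 1 / (2 * √u) = 1 / √u / 2 := by field_simp
    simp only [Pi.add_apply]
    rw [this, h4]
    linear_combination (-A * w * Real.sin (w * Real.log u) + B * w * Real.cos (w * Real.log u)) * h3
  refine ⟨by fun_prop, ?_, fun u hu => key u hu A B, ?_⟩
  · have : ContDiffOn ℝ (⊤ : ℕ∞) (fun u : ℝ => √u / u) (Set.Ioi 0) :=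
      hs.div contDiffOn_id (fun u hu => ne_of_gt hu)
    fun_prop
  · intro u hu
    have h := (key u hu (A / 2 + w * B) (B / 2 - w * A)).div (hasDerivAt_id u) hu.ne'
    refine (h.congr_deriv ?_).congr_of_eventuallyEq (Filter.Eventually.of_forall fun x => ?_)
    · simp only [id, hw]; field_simp; ring
    · simp only [id, Pi.div_apply]; ring

lemma exists_sol (l : ℝ) : ∃ f f' g g' h h' k k' : ℝ → ℝ,
    Sol l f f' ∧ Sol l g g' ∧ Sol l h h' ∧ Sol l k k' ∧ ∀ u, 0 < u →
      f u * g u + h u * k u = u ∧ f' u * g u + f u * g' u + (h' u * k u + h u * k' u) = 1 ∧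
      f' u * g' u + h' u * k' u = l / u := by
  rcases le_or_gt l (1/4) with hl | hl
  · set w := √(1/4 - l) with hw
    have hw2 : w ^ 2 = 1/4 - l := Real.sq_sqrt (by linarith)
    refine ⟨_, _, _, _, _, _, _, _, sol_rpow l (1/2 + w) (by linarith), sol_rpow l (1/2 - w)
      (by linarith), sol_zero l, sol_zero l, ?_⟩
    intro u hu
    have e : u ^ (1/2 + w) * u ^ (1/2 - w) = u := by
      rw [← Real.rpow_add hu]; norm_num
    simp only [Real.rpow_sub_one hu.ne']
    generalize u ^ (1/2 + w) = x at *
    generalize u ^ (1/2 - w) = y at *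
    refine ⟨by linarith, ?_, ?_⟩
    · field_simp; linear_combination 2 * e
    · field_simp; linear_combination (1 - 4 * w^2) * e - 4 * u * hw2
  · set w := √(l - 1/4) with hw
    have hw2 : w ^ 2 = l - 1/4 := Real.sq_sqrt (by linarith)
    have e := sol_osc l w 1 0 (by linarith)
    have e' := sol_osc l w 0 1 (by linarith)
    refine ⟨_, _, _, _, _, _, _, _, e, e, e', e', ?_⟩
    intro u hu
    have hq : √u ^ 2 = u := Real.sq_sqrt hu.le
    have ht := Real.sin_sq_add_cos_sq (w * Real.log u)
    set S := Real.sin (w * Real.log u)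
    set C := Real.cos (w * Real.log u)
    refine ⟨?_, ?_, ?_⟩
    · linear_combination (S^2 + C^2) * hq + u * ht
    · field_simp; rw [hq]; linear_combination 2 * u * ht
    · field_simp; rw [hq]; linear_combination u * (1 + 4 * w^2) * ht + 4 * u * hw2

lemma exists_diag (a b c : ℝ) : ∃ s t l m : ℝ, s ^ 2 + t ^ 2 = 1 ∧
    a = l * s ^ 2 + m * t ^ 2 ∧ b = (l - m) * s * t ∧ c = l * t ^ 2 + m * s ^ 2 := by
  let w : ℂ := ⟨(a - c) / 2, b⟩
  have h1 : ‖w‖ * Real.cos w.arg = (a - c) / 2 := Complex.norm_mul_cos_arg w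
  have h2 : ‖w‖ * Real.sin w.arg = b := Complex.norm_mul_sin_arg w
  obtain ⟨x, hx⟩ : ∃ x, w.arg = 2 * x := ⟨w.arg / 2, by ring⟩
  rw [hx] at h1 h2
  rw [Real.cos_two_mul] at h1
  rw [Real.sin_two_mul] at h2
  have h3 := Real.sin_sq_add_cos_sq x
  refine ⟨Real.cos x, Real.sin x, (a + c) / 2 + ‖w‖, (a + c) / 2 - ‖w‖, by linarith, ?_, ?_, ?_⟩
  · linear_combination -h1 - ((a + c) / 2 - ‖w‖) * h3
  · linear_combination -h2
  · linear_combination h1 - ((a + c) / 2 + ‖w‖) * h3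

lemma kL_reducible (a b c : ℝ) : IsReducible (siH a b c) {p | 0 < p 0} (kL a b c) := by
  obtain ⟨s, t, l, m, hst, ha, hb, hc⟩ := exists_diag a b c
  obtain ⟨f1, f1', g1, g1', h1, h1', k1, k1', F1, G1, H1, K1, E1⟩ := exists_sol l
  obtain ⟨f2, f2', g2, g2', h2, h2', k2, k2', F2, G2, H2, K2, E2⟩ := exists_sol m
  have p1 : a * s + b * t = l * s := by rw [ha, hb]; linear_combination l * s * hst
  have p2 : b * s + c * t = l * t := by rw [hc, hb]; linear_combination l * t * hst
  have q1 : a * (-t) + b * s = m * (-t) := by rw [ha, hb]; linear_combination -m * t * hst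
  have q2 : b * (-t) + c * s = m * s := by rw [hc, hb]; linear_combination m * s * hst
  refine ⟨0, 5, ![-2, 1, 1, 1, 1],
    ![kN, kF f1 f1' s t, kF h1 h1' s t, kF f2 f2' (-t) s, kF h2 h2' (-t) s],
    ![kD a b c, kF g1 g1' s t, kF k1 k1' s t, kF g2 g2' (-t) s, kF k2 k2' (-t) s], ?_, ?_, ?_⟩
  · intro i
    fin_cases i
    · exact kN_killing a b c
    · exact kF_killing a b c l s t p1 p2 _ _ F1
    · exact kF_killing a b c l s t p1 p2 _ _ H1
    · exact kF_killing a b c m (-t) s q1 q2 _ _ F2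
    · exact kF_killing a b c m (-t) s q1 q2 _ _ H2
  · intro i
    fin_cases i
    · exact kD_killing a b c
    · exact kF_killing a b c l s t p1 p2 _ _ G1
    · exact kF_killing a b c l s t p1 p2 _ _ K1
    · exact kF_killing a b c m (-t) s q1 q2 _ _ G2
    · exact kF_killing a b c m (-t) s q1 q2 _ _ K2
  · intro p hp i j
    have hp' : 0 < p 0 := hp
    have hne : (p 0) ≠ 0 := hp'.ne'
    obtain ⟨A1, B1, C1⟩ := E1 _ hp'
    obtain ⟨A2, B2, C2⟩ := E2 _ hp'
    have hT : p 0 * siH a b c p * 2 = l / p 0 * (s * p 2 + t * p 3) ^ 2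
        + m / p 0 * (-t * p 2 + s * p 3) ^ 2 := by
      simp only [siH]; rw [ha, hb, hc]; field_simp; ring
    rw [← C1, ← C2] at hT
    have hs5 : ∀ F : Fin 5 → ℝ, ∑ i, F i = F 0 + F 1 + F 2 + F 3 + F 4 := Fin.sum_univ_five
    rw [hs5]
    change kL a b c p i j = 0 * _
      + ((-2) * ((kN p i * kD a b c p j + kN p j * kD a b c p i) / 2)
      + 1 * ((kF f1 f1' s t p i * kF g1 g1' s t p j + kF f1 f1' s t p j * kF g1 g1' s t p i) / 2)
      + 1 * ((kF h1 h1' s t p i * kF k1 k1' s t p j + kF h1 h1' s t p j * kF k1 k1' s t p i) / 2)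
      + 1 * ((kF f2 f2' (-t) s p i * kF g2 g2' (-t) s p j
        + kF f2 f2' (-t) s p j * kF g2 g2' (-t) s p i) / 2)
      + 1 * ((kF h2 h2' (-t) s p i * kF k2 k2' (-t) s p j
        + kF h2 h2' (-t) s p j * kF k2 k2' (-t) s p i) / 2))
    have heta : eta i j = -(kd 0 i * kd 1 j + kd 1 i * kd 0 j) + kd 2 i * kd 2 j
        + kd 3 i * kd 3 j := by
      fin_cases i <;> fin_cases j <;> simp [eta, ppMetric, kd]
    simp only [kL, metric_eq, hX, kN, kD, kF, heta]
    linear_combination (kd 0 i * kd 0 j) * hT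
      - (s * kd 2 i + t * kd 3 i) * (s * kd 2 j + t * kd 3 j) * A1
      - (-t * kd 2 i + s * kd 3 i) * (-t * kd 2 j + s * kd 3 j) * A2
      + (s * p 2 + t * p 3) / 2 * (kd 0 i * (s * kd 2 j + t * kd 3 j)
        + kd 0 j * (s * kd 2 i + t * kd 3 i)) * B1
      + (-t * p 2 + s * p 3) / 2 * (kd 0 i * (-t * kd 2 j + s * kd 3 j)
        + kd 0 j * (-t * kd 2 i + s * kd 3 i)) * B2
      - p 0 * (kd 2 i * kd 2 j + kd 3 i * kd 3 j) * hst
      + (kd 0 i * (p 2 * kd 2 j + p 3 * kd 3 j) + kd 0 j * (p 2 * kd 2 i + p 3 * kd 3 i)) / 2 * hst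

/-- For the singular scale-invariant plane wave
`2H = u⁻²(a y² + 2b yz + c z²)` on `{u > 0}` (with `a,b,c` not all zero), the vector field
`X₆` with covariant components `-2v δ^u_a + y δ^y_a + z δ^z_a` is homothetic with `ψ = 1`,
and the Koutras Killing tensor `L_{ab} = k_{(a}(X₆)_{b)} + u g_{ab}` is reducible. -/
theorem stmt1 (a b c : ℝ) (habc : ¬(a = 0 ∧ b = 0 ∧ c = 0)) :
    let U : Set Pt := {p | 0 < p 0}
    let H : Pt → ℝ := fun p =>
      (a * (p 2) ^ 2 + 2 * b * (p 2) * (p 3) + c * (p 3) ^ 2) / (2 * (p 0) ^ 2)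
    let X₆ : Pt → Fin 4 → ℝ := fun p i =>
      -2 * p 1 * kd 0 i + p 2 * kd 2 i + p 3 * kd 3 i
    let L : Pt → Fin 4 → Fin 4 → ℝ := fun p i j =>
      ((-kd 0 i) * X₆ p j + (-kd 0 j) * X₆ p i) / 2 + p 0 * ppMetric H p i j
    (∀ p ∈ U, ∀ i j,
        covD1 H X₆ p i j + covD1 H X₆ p j i = 2 * (1 * ppMetric H p i j)) ∧
    IsKillingTensor H U L ∧ IsReducible H U L := by
  exact ⟨fun p hp i j => hom_eq a b c p hp i j, kL_killing a b c, kL_reducible a b c⟩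

end
end

section
/- Consider the pp-wave metric with H = z⁻² on U = {(u,v,y,z) ∈ ℝ⁴ : z > 0}, i.e. g = −2 du dv − 2z⁻² du² + dy² + dz². Then each of the following five symmetric tensor fields is a Killing tensor of g, and no nontrivial ℝ-linear combination of them is reducible (in particular each is irreducible): (K₁)_{ab} = −2y²z⁻² δ^u_a δ^u_b − z² δ^y_a δ^y_b + 2yz δ_{(a}^y δ_{b)}^z − y² δ^z_a δ^z_b; (K₂)_{ab} = 2yz⁻² δ^u_a δ^u_b − z δ_{(a}^y δ_{b)}^z + y δ^z_a δ^z_b; (K₃)_{ab} = 2uyz⁻² δ^u_a δ^u_b + z² δ_{(a}^u δ_{b)}^y − yz δ_{(a}^u δ_{b)}^z − uz δ_{(a}^y δ_{b)}^z + uy δ^z_a δ^z_b; (K₄)_{ab} = 2uz⁻² δ^u_a δ^u_b − z δ_{(a}^u δ_{b)}^z + u δ^z_a δ^z_b; (K₅)_{ab} = (z² + 2u²z⁻²) δ^u_a δ^u_b − 2uz δ_{(a}^u δ_{b)}^z + u² δ^z_a δ^z_b. -/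
noncomputable section

/-- The five Killing tensors of the pp-wave spacetime with `H = z⁻²`. -/
def Kex1 : Fin 5 → Pt → Fin 4 → Fin 4 → ℝ :=
  ![fun p a b => -2 * (p 2) ^ 2 / (p 3) ^ 2 * sd 0 0 a b - (p 3) ^ 2 * sd 2 2 a b
      + 2 * (p 2) * (p 3) * sd 2 3 a b - (p 2) ^ 2 * sd 3 3 a b,
    fun p a b => 2 * (p 2) / (p 3) ^ 2 * sd 0 0 a b - (p 3) * sd 2 3 a b
      + (p 2) * sd 3 3 a b,
    fun p a b => 2 * (p 0) * (p 2) / (p 3) ^ 2 * sd 0 0 a b + (p 3) ^ 2 * sd 0 2 a b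
      - (p 2) * (p 3) * sd 0 3 a b - (p 0) * (p 3) * sd 2 3 a b
      + (p 0) * (p 2) * sd 3 3 a b,
    fun p a b => 2 * (p 0) / (p 3) ^ 2 * sd 0 0 a b - (p 3) * sd 0 3 a b
      + (p 0) * sd 3 3 a b,
    fun p a b => ((p 3) ^ 2 + 2 * (p 0) ^ 2 / (p 3) ^ 2) * sd 0 0 a b
      - 2 * (p 0) * (p 3) * sd 0 3 a b + (p 0) ^ 2 * sd 3 3 a b]


theorem pd_add' {c : Fin 4} {f g : Pt → ℝ} {p : Pt} (hf : DifferentiableAt ℝ f p)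
    (hg : DifferentiableAt ℝ g p) : pd c (fun q => f q + g q) p = pd c f p + pd c g p := by
  unfold pd; rw [fderiv_fun_add hf hg]; rfl

theorem pd_sub' {c : Fin 4} {f g : Pt → ℝ} {p : Pt} (hf : DifferentiableAt ℝ f p)
    (hg : DifferentiableAt ℝ g p) : pd c (fun q => f q - g q) p = pd c f p - pd c g p := by
  unfold pd; rw [fderiv_fun_sub hf hg]; rfl

theorem pd_mul' {c : Fin 4} {f g : Pt → ℝ} {p : Pt} (hf : DifferentiableAt ℝ f p)
    (hg : DifferentiableAt ℝ g p) :
    pd c (fun q => f q * g q) p = f p * pd c g p + g p * pd c f p := by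
  unfold pd; rw [fderiv_fun_mul hf hg]; simp

theorem pd_const' {c : Fin 4} {k : ℝ} {p : Pt} : pd c (fun _ => k) p = 0 := by
  unfold pd; simp

theorem pd_neg' {c : Fin 4} {f : Pt → ℝ} {p : Pt} : pd c (fun q => - f q) p = - pd c f p := by
  unfold pd; rw [fderiv_fun_neg]; rfl

theorem pd_coord {c i : Fin 4} {p : Pt} : pd c (fun q => q i) p = kd i c := by
  unfold pd kd
  have h : HasFDerivAt (fun q : Pt => q i) (ContinuousLinearMap.proj (R := ℝ) i) p :=
    (ContinuousLinearMap.proj (R := ℝ) (φ := fun _ : Fin 4 => ℝ) i).hasFDerivAt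
  rw [h.fderiv]
  simp [Pi.single_apply]

theorem pd_sq {c : Fin 4} {f : Pt → ℝ} {p : Pt} (hf : DifferentiableAt ℝ f p) :
    pd c (fun q => f q ^ 2) p = 2 * f p * pd c f p := by
  have : (fun q => f q ^ 2) = fun q => f q * f q := by funext q; ring
  rw [this, pd_mul' hf hf]; ring

theorem pd_inv' {c : Fin 4} {f : Pt → ℝ} {p : Pt} (hf : DifferentiableAt ℝ f p) (h0 : f p ≠ 0) :
    pd c (fun q => (f q)⁻¹) p = - pd c f p / f p ^ 2 := by
  unfold pd
  have h := (hasDerivAt_inv h0).comp_hasFDerivAt p hf.hasFDerivAt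
  have h' : HasFDerivAt (fun q => (f q)⁻¹) (-(f p ^ 2)⁻¹ • fderiv ℝ f p) p := h
  rw [h'.fderiv]
  simp only [smul_apply, smul_eq_mul]
  ring

theorem dif_coord {i : Fin 4} {p : Pt} : DifferentiableAt ℝ (fun q : Pt => q i) p := by
  fun_prop

/-- Derivatives of the coefficient `1 / z ^ 2`. -/
theorem pd_H {c : Fin 4} {p : Pt} (h : 0 < p 3) :
    pd c (fun q => (q 3 ^ 2)⁻¹) p = -2 / p 3 ^ 3 * kd 3 c := by
  rw [pd_inv' (by fun_prop) (by positivity), pd_sq dif_coord, pd_coord]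
  field_simp

theorem pd_divz {c : Fin 4} {f : Pt → ℝ} {p : Pt} (hf : DifferentiableAt ℝ f p) (h : 0 < p 3) :
    pd c (fun q => f q / q 3 ^ 2) p = pd c f p / p 3 ^ 2 - 2 * f p / p 3 ^ 3 * kd 3 c := by
  have : (fun q : Pt => f q / q 3 ^ 2) = fun q => f q * (q 3 ^ 2)⁻¹ := by
    funext q; rw [div_eq_mul_inv]
  have h0 : p 3 ^ 2 ≠ 0 := by positivity
  rw [this, pd_mul' hf (by fun_prop (disch := assumption)), pd_H h]
  field_simp
  ring

theorem sd_symm (i j a b : Fin 4) : sd i j a b = sd i j b a := by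
  unfold sd; ring

theorem kd_self (a : Fin 4) : kd a a = 1 := by simp [kd]
theorem kd_01 : kd 0 1 = 0 := by simp [kd]
theorem kd_02 : kd 0 2 = 0 := by simp [kd]
theorem kd_03 : kd 0 3 = 0 := by simp [kd]
theorem kd_10 : kd 1 0 = 0 := by simp [kd]
theorem kd_12 : kd 1 2 = 0 := by simp [kd]
theorem kd_13 : kd 1 3 = 0 := by simp [kd]
theorem kd_20 : kd 2 0 = 0 := by simp [kd]
theorem kd_21 : kd 2 1 = 0 := by simp [kd]
theorem kd_23 : kd 2 3 = 0 := by simp [kd]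
theorem kd_30 : kd 3 0 = 0 := by simp [kd]
theorem kd_31 : kd 3 1 = 0 := by simp [kd]
theorem kd_32 : kd 3 2 = 0 := by simp [kd]

theorem Gamma_eq {p : Pt} (h : 0 < p 3) (d a b : Fin 4) :
    Gamma (fun q => (q 3 ^ 2)⁻¹) p d a b = -2 / p 3 ^ 3 *
      (kd 3 d * kd 0 a * kd 0 b + kd 1 d * (kd 0 a * kd 3 b + kd 3 a * kd 0 b)) := by
  unfold Gamma
  rw [pd_H h, pd_H h, pd_H h]
  fin_cases d <;> fin_cases a <;> fin_cases b <;> simp [kd]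

set_option maxHeartbeats 4000000 in
theorem killing_all (i : Fin 5) :
    IsKillingTensor (fun p => ((p 3) ^ 2)⁻¹) {p | 0 < p 3} (Kex1 i) := by
  refine ⟨?_, ?_, ?_⟩
  · intro a b
    have hz : ∀ p ∈ {p : Pt | 0 < p 3}, p 3 ^ 2 ≠ 0 := fun p hp => by
      have : 0 < p 3 := hp
      positivity
    fin_cases i <;> simp only [Kex1] <;> simp <;> fun_prop (disch := assumption)
  · intro p a b
    fin_cases i <;> simp [Kex1, sd_symm _ _ a b]
  · intro p hp
    have h : 0 < p 3 := hp
    have h0 : p 3 ^ 2 ≠ 0 := by positivity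
    have h1 : p 3 ≠ 0 := h.ne'
    have key : ∀ a b c, pd c (fun q => Kex1 i q a b) p =
      (![fun a b c => (-4 * p 2 * kd 2 c / p 3 ^ 2 + 4 * p 2 ^ 2 / p 3 ^ 3 * kd 3 c) * sd 0 0 a b
          - 2 * p 3 * kd 3 c * sd 2 2 a b
          + 2 * (p 2 * kd 3 c + p 3 * kd 2 c) * sd 2 3 a b - 2 * p 2 * kd 2 c * sd 3 3 a b,
        fun a b c => (2 * kd 2 c / p 3 ^ 2 - 4 * p 2 / p 3 ^ 3 * kd 3 c) * sd 0 0 a b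
          - kd 3 c * sd 2 3 a b + kd 2 c * sd 3 3 a b,
        fun a b c => (2 * (p 0 * kd 2 c + p 2 * kd 0 c) / p 3 ^ 2
            - 4 * p 0 * p 2 / p 3 ^ 3 * kd 3 c) * sd 0 0 a b
          + 2 * p 3 * kd 3 c * sd 0 2 a b - (p 2 * kd 3 c + p 3 * kd 2 c) * sd 0 3 a b
          - (p 0 * kd 3 c + p 3 * kd 0 c) * sd 2 3 a b
          + (p 0 * kd 2 c + p 2 * kd 0 c) * sd 3 3 a b,
        fun a b c => (2 * kd 0 c / p 3 ^ 2 - 4 * p 0 / p 3 ^ 3 * kd 3 c) * sd 0 0 a b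
          - kd 3 c * sd 0 3 a b + kd 0 c * sd 3 3 a b,
        fun a b c => (2 * p 3 * kd 3 c + 4 * p 0 * kd 0 c / p 3 ^ 2
            - 4 * p 0 ^ 2 / p 3 ^ 3 * kd 3 c) * sd 0 0 a b
          - 2 * (p 0 * kd 3 c + p 3 * kd 0 c) * sd 0 3 a b
          + 2 * p 0 * kd 0 c * sd 3 3 a b] : Fin 5 → Fin 4 → Fin 4 → Fin 4 → ℝ) i a b c := by
      intro a b c
      fin_cases i <;> simp only [Kex1] <;> simp <;>
      simp (disch := first | assumption | fun_prop (disch := assumption)) only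
        [pd_add', pd_sub', pd_mul', pd_divz, pd_sq, pd_const', pd_coord, pd_neg'] <;>
      ring
    intro a b c
    simp only [covD2, key, Fin.sum_univ_four, Gamma_eq h]
    fin_cases i <;> simp [Kex1, sd, kd_self, kd_01, kd_02, kd_03, kd_10, kd_12, kd_13, kd_20, kd_21,
        kd_23, kd_30, kd_31, kd_32] <;> field_simp <;> ring

/-- Smooth functions on the half space. -/
def Sm (f : Pt → ℝ) : Prop := ContDiffOn ℝ (⊤ : ℕ∞) f {p : Pt | 0 < p 3}

theorem U_open : IsOpen {p : Pt | 0 < p 3} :=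
  isOpen_lt continuous_const (continuous_apply 3)

theorem U_nhds {p : Pt} (hp : 0 < p 3) : {p : Pt | 0 < p 3} ∈ nhds p := U_open.mem_nhds hp

theorem Sm.at {f : Pt → ℝ} (hf : Sm f) {p : Pt} (hp : 0 < p 3) :
    ContDiffAt ℝ (⊤ : ℕ∞) f p := hf.contDiffAt (U_nhds hp)

theorem Sm.dif {f : Pt → ℝ} (hf : Sm f) {p : Pt} (hp : 0 < p 3) : DifferentiableAt ℝ f p :=
  (hf.at hp).differentiableAt (by simp)

theorem Sm.pd {f : Pt → ℝ} (hf : Sm f) (i : Fin 4) : Sm (pd i f) := by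
  have h : ContDiffOn ℝ (⊤ : ℕ∞) (fderiv ℝ f) {p : Pt | 0 < p 3} :=
    ContDiffOn.fderiv_of_isOpen hf U_open (by simp)
  exact h.clm_apply contDiffOn_const

theorem pd_congr {f g : Pt → ℝ} (h : ∀ p : Pt, 0 < p 3 → f p = g p) {i : Fin 4} {p : Pt}
    (hp : 0 < p 3) : pd i f p = pd i g p := by
  unfold pd
  rw [Filter.EventuallyEq.fderiv_eq (Filter.eventuallyEq_of_mem (U_nhds hp) h)]

theorem pd_comm {f : Pt → ℝ} (hf : Sm f) (i j : Fin 4) {p : Pt} (hp : 0 < p 3) :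
    pd i (pd j f) p = pd j (pd i f) p := by
  have hs : IsSymmSndFDerivAt ℝ f p := (hf.at hp).isSymmSndFDerivAt (by
    rw [minSmoothness_of_isRCLikeNormedField]
    exact WithTop.coe_le_coe.2 (le_top : (2 : ℕ∞) ≤ ⊤))
  have hd : DifferentiableAt ℝ (fderiv ℝ f) p :=
    ((hf.at hp).fderiv_right (m := 1) (by norm_cast)).differentiableAt (by simp)
  have e : ∀ i j, pd i (pd j f) p =
      fderiv ℝ (fderiv ℝ f) p (Pi.single i 1) (Pi.single j 1) := by
    intro i j
    unfold pd
    rw [fderiv_clm_apply hd (by fun_prop)]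
    simp
  rw [e, e]
  exact hs _ _

/-- Every Killing vector has vanishing `z`-component. -/
theorem kv_z {X : Pt → Fin 4 → ℝ}
    (hX : IsKillingVector (fun p => ((p 3) ^ 2)⁻¹) {p | 0 < p 3} X) (p : Pt) (hp : 0 < p 3) :
    X p 3 = 0 := by
  obtain ⟨hs, hk⟩ := hX
  have hG0 : ∀ p : Pt, 0 < p 3 → pd 0 (fun q : Pt => (q 3 ^ 2)⁻¹) p = 0 := by
    intro p h; rw [pd_H h]; simp [kd]
  have hG2 : ∀ p : Pt, 0 < p 3 → pd 2 (fun q : Pt => (q 3 ^ 2)⁻¹) p = 0 := by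
    intro p h; rw [pd_H h]; simp [kd]
  obtain ⟨h, hh⟩ : ∃ h : Pt → ℝ, h = pd 3 (fun q : Pt => (q 3 ^ 2)⁻¹) := ⟨_, rfl⟩
  obtain ⟨A, hA⟩ : ∃ A : Pt → ℝ, A = fun q => X q 0 := ⟨_, rfl⟩
  obtain ⟨B, hB⟩ : ∃ B : Pt → ℝ, B = fun q => X q 1 := ⟨_, rfl⟩
  obtain ⟨D, hD⟩ : ∃ D : Pt → ℝ, D = fun q => X q 3 := ⟨_, rfl⟩
  have sA : Sm A := hA ▸ hs 0
  have sB : Sm B := hB ▸ hs 1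
  have sD : Sm D := hD ▸ hs 3
  have h0 : ∀ p : Pt, 0 < p 3 → h p = -2 / p 3 ^ 3 := by
    intro p hp; rw [hh, pd_H hp]; simp [kd]
  have e_vv : ∀ p : Pt, 0 < p 3 → pd 1 B p = 0 := by
    intro p hp
    have := hk p hp 1 1
    simp [covD1, Gamma] at this
    rw [hB]; linarith
  have e_uv : ∀ p : Pt, 0 < p 3 → pd 1 A p = - pd 0 B p := by
    intro p hp
    have := hk p hp 0 1
    simp [covD1, Gamma] at this
    rw [hA, hB]; linarith
  have e_vz : ∀ p : Pt, 0 < p 3 → pd 1 D p = - pd 3 B p := by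
    intro p hp
    have := hk p hp 1 3
    simp [covD1, Gamma] at this
    rw [hB, hD]; linarith
  have e_zz : ∀ p : Pt, 0 < p 3 → pd 3 D p = 0 := by
    intro p hp
    have := hk p hp 3 3
    simp [covD1, Gamma] at this
    rw [hD]; linarith
  have e_uu : ∀ p : Pt, 0 < p 3 → pd 0 A p = h p * D p := by
    intro p hp
    have := hk p hp 0 0
    simp [covD1, Gamma, Fin.sum_univ_four, hG0 p hp, hG2 p hp] at this
    rw [hA, hD, hh]; linarith
  have e_uz : ∀ p : Pt, 0 < p 3 → pd 3 A p = 2 * h p * B p - pd 0 D p := by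
    intro p hp
    have := hk p hp 0 3
    simp [covD1, Gamma, Fin.sum_univ_four] at this
    rw [hA, hB, hD, hh]; linarith
  have sh : Sm h := by
    have : Sm (fun q : Pt => (q 3 ^ 2)⁻¹) := by
      have hz : ∀ p ∈ {p : Pt | 0 < p 3}, p 3 ^ 2 ≠ 0 := fun p hp => by
        have : 0 < p 3 := hp
        positivity
      unfold Sm
      fun_prop (disch := assumption)
    rw [hh]; exact this.pd 3
  -- derivatives of h
  have hc : ∀ c : Fin 4, ∀ p : Pt, 0 < p 3 → pd c h p = 6 / p 3 ^ 4 * kd 3 c := by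
    intro c p hp
    have e1 : ∀ p : Pt, 0 < p 3 → h p * (p 3 * p 3 ^ 2) = -2 := by
      intro p hp; rw [h0 p hp]; field_simp
    have e2 := pd_congr (i := c) e1 hp
    rw [pd_mul' (sh.dif hp) (by fun_prop), pd_mul' (by fun_prop) (by fun_prop), pd_sq dif_coord,
      pd_coord, pd_const', h0 p hp] at e2
    field_simp at e2 ⊢
    linarith
  -- D_uv = B_uz = 0
  have e_uzB : ∀ p : Pt, 0 < p 3 → pd 3 (pd 0 B) p = 0 := by
    intro p hp
    have e1 := pd_congr (i := 1) e_uz hp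
    rw [pd_sub' (((sh.dif hp).const_mul 2).fun_mul (sB.dif hp)) ((sD.pd 0).dif hp),
      pd_mul' ((sh.dif hp).const_mul 2) (sB.dif hp),
      pd_mul' (by fun_prop) (sh.dif hp), hc 1 p hp, pd_const', e_vv p hp,
      pd_comm sA 1 3 hp, pd_congr e_uv hp, pd_neg', pd_comm sD 1 0 hp, pd_congr e_vz hp, pd_neg',
      pd_comm sB 0 3 hp] at e1
    simp [kd] at e1
    linarith
  have e1 : ∀ p : Pt, 0 < p 3 →
      6 / p 3 ^ 4 * D p + pd 0 (pd 0 D) p = 2 * h p * pd 0 B p := by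
    intro p hp
    have e1 := pd_congr (i := 0) e_uz hp
    rw [pd_sub' (((sh.dif hp).const_mul 2).fun_mul (sB.dif hp)) ((sD.pd 0).dif hp),
      pd_mul' ((sh.dif hp).const_mul 2) (sB.dif hp),
      pd_mul' (by fun_prop) (sh.dif hp), hc 0 p hp, pd_const',
      pd_comm sA 0 3 hp, pd_congr e_uu hp, pd_mul' (sh.dif hp) (sD.dif hp), e_zz p hp,
      hc 3 p hp] at e1
    simp [kd] at e1
    linarith
  -- the z-derivative, after multiplication by z ^ 4
  have e2 : ∀ p : Pt, 0 < p 3 →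
      6 * D p + (p 3 ^ 2 * p 3 ^ 2) * pd 0 (pd 0 D) p = (-4 * p 3) * pd 0 B p := by
    intro p hp
    have := e1 p hp
    rw [h0 p hp] at this
    field_simp at this
    linarith
  have e3 : ∀ p : Pt, 0 < p 3 → pd 3 (pd 0 (pd 0 D)) p = 0 := by
    intro p hp
    have z1 : ∀ p : Pt, 0 < p 3 → pd 3 (pd 0 D) p = 0 := by
      intro p hp
      rw [pd_comm sD 3 0 hp, pd_congr e_zz hp, pd_const']
    rw [pd_comm (sD.pd 0) 3 0 hp, pd_congr z1 hp, pd_const']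
  have e4 : ∀ p : Pt, 0 < p 3 → p 3 ^ 3 * pd 0 (pd 0 D) p = - pd 0 B p := by
    intro p hp
    have e := pd_congr (i := 3) e2 hp
    rw [pd_add' ((sD.dif hp).const_mul 6) (((by fun_prop :
        DifferentiableAt ℝ (fun q : Pt => q 3 ^ 2 * q 3 ^ 2) p)).fun_mul (((sD.pd 0).pd 0).dif hp)),
      pd_mul' (by fun_prop) (sD.dif hp),
      pd_mul' (by fun_prop) (((sD.pd 0).pd 0).dif hp),
      pd_mul' (by fun_prop) (by fun_prop), pd_sq dif_coord,
      pd_mul' (by fun_prop) ((sB.pd 0).dif hp), pd_mul' (by fun_prop) dif_coord, pd_coord,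
      e3 p hp, e_zz p hp, e_uzB p hp] at e
    simp [kd, pd_const'] at e
    linarith
  have e5 : ∀ p : Pt, 0 < p 3 → D p = (-(1/2) * p 3) * pd 0 B p := by
    intro p hp
    have a := e2 p hp
    have b := e4 p hp
    linear_combination a / 6 - p 3 * b / 6
  have e6 : pd 0 B p = 0 := by
    have e := pd_congr (i := 3) e5 hp
    rw [e_zz p hp, pd_mul' (by fun_prop) ((sB.pd 0).dif hp), pd_mul' (by fun_prop) dif_coord,
      pd_coord, e_uzB p hp] at e
    simp [kd, pd_const'] at e
    linarith
  have e7 := e5 p hp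
  rw [e6, hD] at e7
  simpa using e7

/-- For the pp-wave metric with `H = z⁻²` on `{z > 0}`, the five tensor
fields `K₁,…,K₅` are Killing tensors and no nontrivial linear combination of them is
reducible (in particular each is irreducible). -/
theorem stmt3 :
    let U : Set Pt := {p | 0 < p 3}
    let H : Pt → ℝ := fun p => ((p 3) ^ 2)⁻¹
    (∀ i, IsKillingTensor H U (Kex1 i)) ∧
    (∀ c : Fin 5 → ℝ,
      IsReducible H U (fun p a b => ∑ i, c i * Kex1 i p a b) → c = 0) := by
  intro U H
  refine ⟨killing_all, ?_⟩
  rintro c ⟨c₀, n, k, X, Y, hX, hY, hK⟩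
  have main : ∀ u y : ℝ, -(c 0 * y ^ 2) + c 1 * y + c 2 * (u * y) + c 3 * u + c 4 * u ^ 2 = c₀ := by
    intro u y
    have h1 : (0 : ℝ) < (![u, 0, y, 1] : Pt) 3 := by simp
    have h := hK ![u, 0, y, 1] h1 3 3
    have hz : ∀ i, X i ![u, 0, y, 1] 3 = 0 := fun i => kv_z (hX i) _ h1
    simp only [hz] at h
    simp [Fin.sum_univ_five, Kex1, sd, kd, ppMetric] at h
    linarith
  have m00 := main 0 0
  have m1 := main 1 0
  have m2 := main (-1) 0
  have m3 := main 0 1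
  have m4 := main 0 (-1)
  have m5 := main 1 1
  funext i
  fin_cases i <;> simp <;> linarith

end
end
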